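/- There exists an absolute constant C such that for every finite irreducible reversible Markov chain (Ω,P,π), every probability measure μ on Ω, every real t ≥ 1 and every s with 2 ≤ s ≤ e^t: d_L(t + m, μ) ≤ d_c(t/2, μ) + 2/s² + √(C/s), where r := 2√(2t log s) and m := ⌈r(√s + 1)⌉. -/

import Mathlib

open Matrix Filter Asymptotics

/-- `P` is a stochastic matrix. -/
def IsStochastic {Ω : Type*} [Fintype Ω] (P : Matrix Ω Ω ℝ) : Prop :=
  (∀ x y, 0 ≤ P x y) ∧ ∀ x, ∑ y, P x y = 1

/-- `P` is irreducible. -/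
def IsIrreducibleMatrix {Ω : Type*} [Fintype Ω] [DecidableEq Ω] (P : Matrix Ω Ω ℝ) : Prop :=
  ∀ x y, ∃ n : ℕ, 0 < (P ^ n) x y

/-- `μ` is a probability vector. -/
def IsProbVec {Ω : Type*} [Fintype Ω] (μ : Ω → ℝ) : Prop :=
  (∀ x, 0 ≤ μ x) ∧ ∑ x, μ x = 1

/-- The chain `(P, pi)` is reversible. -/
def IsReversible {Ω : Type*} [Fintype Ω] (P : Matrix Ω Ω ℝ) (pi : Ω → ℝ) : Prop :=
  ∀ x y, pi x * P x y = pi y * P y x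

/-- A finite irreducible Markov chain `P` with stationary distribution `pi`. -/
def IsMC {Ω : Type*} [Fintype Ω] [DecidableEq Ω] (P : Matrix Ω Ω ℝ) (pi : Ω → ℝ) : Prop :=
  IsStochastic P ∧ IsIrreducibleMatrix P ∧ IsProbVec pi ∧ pi ᵥ* P = pi

/-- A finite irreducible reversible Markov chain `P` with stationary distribution `pi`. -/
def IsRevMC {Ω : Type*} [Fintype Ω] [DecidableEq Ω] (P : Matrix Ω Ω ℝ) (pi : Ω → ℝ) : Prop :=
  IsMC P pi ∧ IsReversible P pi

/-- Total-variation distance between two measures on a finite set. -/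
noncomputable def tvDist {Ω : Type*} [Fintype Ω] (μ ν : Ω → ℝ) : ℝ :=
  (∑ x, |μ x - ν x|) / 2

/-- The lazy version `(I + P)/2` of `P`. -/
noncomputable def lazyM {Ω : Type*} [Fintype Ω] [DecidableEq Ω] (P : Matrix Ω Ω ℝ) :
    Matrix Ω Ω ℝ :=
  (2 : ℝ)⁻¹ • (1 + P)

/-- `d_c(t, μ)`: TV distance from stationarity of the continuous-time chain at time `t`,
started from `μ`. -/
noncomputable def contDist {Ω : Type*} [Fintype Ω] [DecidableEq Ω] (P : Matrix Ω Ω ℝ) (pi : Ω → ℝ)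
    (t : ℝ) (μ : Ω → ℝ) : ℝ :=
  tvDist (fun y => ∑' k : ℕ, Real.exp (-t) * t ^ k / (Nat.factorial k) * (μ ᵥ* (P ^ k)) y) pi

/-- `d_L(t, μ)`: TV distance from stationarity of the lazy chain at (discrete) time `t`,
started from `μ`. -/
noncomputable def lazyDist {Ω : Type*} [Fintype Ω] [DecidableEq Ω] (P : Matrix Ω Ω ℝ)
    (pi : Ω → ℝ) (t : ℝ) (μ : Ω → ℝ) : ℝ :=
  tvDist (μ ᵥ* (lazyM P ^ ⌊t⌋₊)) pi

/-- `d_ave(t, μ)`: TV distance from stationarity of the averaged chain at (discrete) time `t`,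
started from `μ`. -/
noncomputable def aveDist {Ω : Type*} [Fintype Ω] [DecidableEq Ω] (P : Matrix Ω Ω ℝ) (pi : Ω → ℝ)
    (t : ℝ) (μ : Ω → ℝ) : ℝ :=
  tvDist (fun y => ((μ ᵥ* (P ^ ⌊t⌋₊)) y + (μ ᵥ* (P ^ (⌊t⌋₊ + 1))) y) / 2) pi

/-- The point mass at `x`. -/
noncomputable def deltaMass {Ω : Type*} [DecidableEq Ω] (x : Ω) : Ω → ℝ :=
  fun y => if y = x then 1 else 0

/-- Worst-case continuous-time distance `d_c(t)`. -/
noncomputable def contDistMax {Ω : Type*} [Fintype Ω] [DecidableEq Ω] (P : Matrix Ω Ω ℝ)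
    (pi : Ω → ℝ) (t : ℝ) : ℝ :=
  ⨆ x : Ω, contDist P pi t (deltaMass x)

/-- Worst-case lazy distance `d_L(t)`. -/
noncomputable def lazyDistMax {Ω : Type*} [Fintype Ω] [DecidableEq Ω] (P : Matrix Ω Ω ℝ)
    (pi : Ω → ℝ) (t : ℝ) : ℝ :=
  ⨆ x : Ω, lazyDist P pi t (deltaMass x)

/-- Worst-case averaged distance `d_ave(t)`. -/
noncomputable def aveDistMax {Ω : Type*} [Fintype Ω] [DecidableEq Ω] (P : Matrix Ω Ω ℝ)
    (pi : Ω → ℝ) (t : ℝ) : ℝ :=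
  ⨆ x : Ω, aveDist P pi t (deltaMass x)

/-- `φ_{α,C}(t) = t + ⌈C t^{(1+2α)/2} √(α log t)⌉`. -/
noncomputable def phiAC (α C t : ℝ) : ℝ :=
  t + ((⌈C * t ^ ((1 + 2 * α) / 2) * Real.sqrt (α * Real.log t)⌉ : ℤ) : ℝ)

/-- `ψ_{α,C}(x) = min (1, x + C |log(2x)|^{-α})`. -/
noncomputable def psiAC (α C x : ℝ) : ℝ :=
  min 1 (x + C * |Real.log (2 * x)| ^ (-α))

/-- `t_c(ε)`, the `ε`-mixing time of the continuous-time chain. -/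
noncomputable def contMix {Ω : Type*} [Fintype Ω] [DecidableEq Ω] (P : Matrix Ω Ω ℝ)
    (pi : Ω → ℝ) (ε : ℝ) : ℝ :=
  sInf {t : ℝ | 0 ≤ t ∧ contDistMax P pi t ≤ ε}

/-- `t_L(ε)`, the `ε`-mixing time of the lazy chain. -/
noncomputable def lazyMix {Ω : Type*} [Fintype Ω] [DecidableEq Ω] (P : Matrix Ω Ω ℝ)
    (pi : Ω → ℝ) (ε : ℝ) : ℕ :=
  sInf {t : ℕ | lazyDistMax P pi t ≤ ε}

/-- `t_ave(ε)`, the `ε`-mixing time of the averaged chain. -/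
noncomputable def aveMix {Ω : Type*} [Fintype Ω] [DecidableEq Ω] (P : Matrix Ω Ω ℝ)
    (pi : Ω → ℝ) (ε : ℝ) : ℕ :=
  sInf {t : ℕ | aveDistMax P pi t ≤ ε}

/-! Laziness makes the continuous-time chain of `P` at time `t / 2` a Poisson(`t`) mixture of the
powers of `Q = lazyM P`. Let `f` be the indicator that attains the total-variation distance after
`N = ⌊t + m⌋` lazy steps. If the Poisson number `k` of jumps is within `r` of `t`, the remaining
`N - k` steps lie in a window of length about `2 r` starting near `r √s`, so `Q ^ (N - k) f` is
bounded by its maximum over this window, and the chain may be tested against this maximal function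
at time `t / 2` instead; Chernoff's bound gives `2 / s ^ 2` for the exceptional values of `k`.

The price is the increase of the stationary mean from `f` to its maximal function, which is at most
the sum of the increments `‖Q ^ (n + 1) f - Q ^ n f‖₁` over the window. Reversibility and laziness
place the spectrum of `Q` on `L²(π)` in `[0, 1]`, where `q ^ n * (1 - q) ≤ 1 / (n + 1)`; hence the
increase is at most (window length) / (window start) `= O(1 / √s)`. -/

section OrderedGroup

variable {G : Type*} [AddCommGroup G]

lemma succ_nsmul_sub_succ_le [PartialOrder G] [IsOrderedAddMonoid G] {u : ℕ → G}
    (hu : ∀ n, 0 ≤ u n) (hdiff : Antitone fun n => u n - u (n + 1)) (m n : ℕ) :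
    (n + 1) • (u (m + n) - u (m + n + 1)) ≤ u m := by
  calc (n + 1) • (u (m + n) - u (m + n + 1))
      ≤ ∑ i ∈ Finset.range (n + 1), (u (m + i) - u (m + i + 1)) := by
        simpa using Finset.card_nsmul_le_sum (Finset.range (n + 1)) _ _ fun i hi =>
          hdiff (Nat.add_le_add_left (Finset.mem_range_succ_iff.mp hi) m)
    _ = u m - u (m + (n + 1)) := Finset.sum_range_sub' (fun i => u (m + i)) (n + 1)
    _ ≤ u m := sub_le_self _ (hu _)

lemma sup'_range_succ_le_add_sum_abs_sub [LinearOrder G] [IsOrderedAddMonoid G]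
    (u : ℕ → G) (l : ℕ) :
    (Finset.range (l + 1)).sup' Finset.nonempty_range_add_one u ≤
      u 0 + ∑ i ∈ Finset.range l, |u (i + 1) - u i| := by
  refine Finset.sup'_le _ _ fun n hn => ?_
  calc u n = u 0 + ∑ i ∈ Finset.range n, (u (i + 1) - u i) := by
        rw [Finset.sum_range_sub, add_sub_cancel]
    _ ≤ u 0 + ∑ i ∈ Finset.range n, |u (i + 1) - u i| := by
        gcongr; exact le_abs_self _
    _ ≤ u 0 + ∑ i ∈ Finset.range l, |u (i + 1) - u i| := by
        gcongr
        exact Finset.mem_range_succ_iff.mp hn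

end OrderedGroup

section StarOrderedRing

variable {R : Type*} [Ring R] [StarRing R] {D Q X : R}

lemma star_pow_mul_mul_pow (hDQ : D * Q = star Q * D) (hX : Commute Q X) (n : ℕ) :
    star (Q ^ n) * (D * X) * Q ^ n = D * (Q ^ (2 * n) * X) := by
  have hpow : D * Q ^ n = star (Q ^ n) * D := by
    rw [star_pow]
    exact SemiconjBy.pow_right hDQ n
  rw [← mul_assoc, ← hpow, mul_assoc, ← (hX.pow_left n).eq, mul_assoc, ← mul_assoc (Q ^ n),
    ← pow_add, two_mul]

variable [PartialOrder R] [StarOrderedRing R]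

lemma mul_eq_star_mul_of_nonneg (hD : 0 ≤ D) (hDQ : 0 ≤ D * Q) : D * Q = star Q * D := by
  simpa [(IsSelfAdjoint.of_nonneg hD).star_eq] using (IsSelfAdjoint.of_nonneg hDQ).star_eq.symm

lemma mul_pow_mul_nonneg (hDQ : D * Q = star Q * D) (hX : Commute Q X) (h₀ : 0 ≤ D * X)
    (h₁ : 0 ≤ D * (Q * X)) (n : ℕ) : 0 ≤ D * (Q ^ n * X) := by
  obtain ⟨k, rfl | rfl⟩ := n.even_or_odd'
  · rw [← star_pow_mul_mul_pow hDQ hX]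
    exact star_left_conjugate_nonneg h₀ _
  · rw [pow_succ, mul_assoc, ← star_pow_mul_mul_pow hDQ ((Commute.refl Q).mul_right hX)]
    exact star_left_conjugate_nonneg h₁ _

lemma mul_pow_nonneg (hD : 0 ≤ D) (hDQ : 0 ≤ D * Q) (n : ℕ) : 0 ≤ D * Q ^ n := by
  simpa using mul_pow_mul_nonneg (mul_eq_star_mul_of_nonneg hD hDQ) (Commute.one_right Q)
    (by simpa using hD) (by simpa using hDQ) n

lemma mul_mul_one_sub_nonneg (hD : 0 ≤ D) (hDQ : 0 ≤ D * Q) (hle : D * Q ≤ D) :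
    0 ≤ D * (Q * (1 - Q)) := by
  have hcomm := mul_eq_star_mul_of_nonneg hD hDQ
  have hsplit : D * (Q * (1 - Q)) =
      star Q * (D - D * Q) * Q + star (1 - Q) * (D * Q) * (1 - Q) := by
    simp only [star_sub, star_one, mul_sub, sub_mul, ← mul_assoc, ← hcomm, mul_one, one_mul]
    abel
  rw [hsplit]
  exact add_nonneg (star_left_conjugate_nonneg (sub_nonneg.mpr hle) Q)
    (star_left_conjugate_nonneg hDQ (1 - Q))

lemma antitone_mul_pow (hD : 0 ≤ D) (hDQ : 0 ≤ D * Q) (hle : D * Q ≤ D) :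
    Antitone fun n => D * Q ^ n := by
  refine antitone_nat_of_succ_le fun n => sub_nonneg.mp ?_
  have h := mul_pow_mul_nonneg (mul_eq_star_mul_of_nonneg hD hDQ)
    ((Commute.one_right Q).sub_right (Commute.refl Q))
    (by simpa [mul_sub] using hle) (mul_mul_one_sub_nonneg hD hDQ hle) n
  rwa [mul_sub, mul_one, ← pow_succ, mul_sub] at h

-- The scalar case is `(n + 1) * (q ^ n * (1 - q)) ≤ 1` for `0 ≤ q ≤ 1`.
theorem succ_sq_nsmul_star_conj_le (hD : 0 ≤ D) (hDQ : 0 ≤ D * Q) (hle : D * Q ≤ D) (n : ℕ) :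
    (n + 1) ^ 2 • (star (Q ^ n - Q ^ (n + 1)) * D * (Q ^ n - Q ^ (n + 1))) ≤ D := by
  have hcomm := mul_eq_star_mul_of_nonneg hD hDQ
  have hanti := antitone_mul_pow hD hDQ hle
  set d : ℕ → R := fun k => D * Q ^ k - D * Q ^ (k + 1) with hd
  have hdd : ∀ k, d k - d (k + 1) = star (1 - Q) * (D * Q ^ k) * (1 - Q) := fun k => by
    have h : star Q * (D * Q ^ k) = D * Q ^ (k + 1) := by
      rw [← mul_assoc, ← hcomm, mul_assoc, ← pow_succ']
    simp only [hd, star_sub, star_one, sub_mul, mul_sub, one_mul, mul_one, h, mul_assoc, ← pow_succ]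
  have hd_nonneg : ∀ k, 0 ≤ d k := fun k => sub_nonneg.mpr (hanti k.le_succ)
  have hd_anti : Antitone d := antitone_nat_of_succ_le fun k => sub_nonneg.mp <| by
    rw [hdd]
    exact star_left_conjugate_nonneg (mul_pow_nonneg hD hDQ k) _
  have hdd_anti : Antitone fun k => d k - d (k + 1) := fun i j hij => by
    simpa only [hdd] using star_left_conjugate_le_conjugate (hanti hij) (1 - Q)
  calc (n + 1) ^ 2 • (star (Q ^ n - Q ^ (n + 1)) * D * (Q ^ n - Q ^ (n + 1)))
      = (n + 1) • (n + 1) • (d (n + n) - d (n + n + 1)) := by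
        have hpow : star (Q ^ n) * D * Q ^ n = D * Q ^ (2 * n) := by
          simpa using star_pow_mul_mul_pow hcomm (Commute.one_right Q) n
        have hfactor : Q ^ n - Q ^ (n + 1) = Q ^ n * (1 - Q) := by
          rw [mul_sub, mul_one, pow_succ]
        rw [smul_smul, ← sq, hdd, ← two_mul, ← hpow, hfactor, star_mul]
        simp only [mul_assoc]
    _ ≤ (n + 1) • d n := nsmul_le_nsmul_right (succ_nsmul_sub_succ_le hd_nonneg hdd_anti n n) _
    _ ≤ D := by
        simpa using succ_nsmul_sub_succ_le (mul_pow_nonneg hD hDQ) hd_anti 0 n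

end StarOrderedRing

section Matrix

variable {Ω : Type*} [Fintype Ω]

lemma IsStochastic.mem_rowStochastic [DecidableEq Ω] {P : Matrix Ω Ω ℝ} (hP : IsStochastic P) :
    P ∈ rowStochastic ℝ Ω :=
  mem_rowStochastic_iff_sum.mpr hP

lemma lazyM_mem_rowStochastic [DecidableEq Ω] {P : Matrix Ω Ω ℝ} (hP : P ∈ rowStochastic ℝ Ω) :
    lazyM P ∈ rowStochastic ℝ Ω := by
  rw [lazyM, smul_add]
  exact convex_rowStochastic (one_mem _) hP (by norm_num) (by norm_num) (by norm_num)

lemma mulVec_mem_Icc [DecidableEq Ω] {P : Matrix Ω Ω ℝ} (hP : P ∈ rowStochastic ℝ Ω) {f : Ω → ℝ}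
    (hf : f ∈ Set.Icc 0 1) : P *ᵥ f ∈ Set.Icc 0 1 := by
  refine ⟨nonneg_mulVec_of_mem_rowStochastic hP hf.1, ?_⟩
  rw [← one_vecMul_of_mem_rowStochastic hP]
  exact fun x => dotProduct_le_dotProduct_of_nonneg_left hf.2 fun y => hP.1 x y

lemma IsProbVec.vecMul [DecidableEq Ω] {P : Matrix Ω Ω ℝ} {μ : Ω → ℝ} (hμ : IsProbVec μ)
    (hP : P ∈ rowStochastic ℝ Ω) : IsProbVec (μ ᵥ* P) := by
  refine ⟨nonneg_vecMul_of_mem_rowStochastic hP hμ.1, ?_⟩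
  rw [← dotProduct_one, ← dotProduct_mulVec, one_vecMul_of_mem_rowStochastic hP, dotProduct_one,
    hμ.2]

lemma IsProbVec.dotProduct_le_one {μ f : Ω → ℝ} (hμ : IsProbVec μ) (hf : f ≤ 1) :
    μ ⬝ᵥ f ≤ 1 :=
  (dotProduct_le_dotProduct_of_nonneg_left hf hμ.1).trans_eq (by rw [dotProduct_one, hμ.2])

lemma exists_tvDist_eq_dotProduct_sub {μ ν : Ω → ℝ} (h : ∑ x, μ x = ∑ x, ν x) :
    ∃ f ∈ Set.Icc (0 : Ω → ℝ) 1, tvDist μ ν = μ ⬝ᵥ f - ν ⬝ᵥ f := by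
  refine ⟨fun x => if ν x ≤ μ x then 1 else 0,
    ⟨fun x => by dsimp; split_ifs <;> norm_num, fun x => by dsimp; split_ifs <;> norm_num⟩, ?_⟩
  have habs : ∀ x, |μ x - ν x| =
      2 * ((μ x - ν x) * if ν x ≤ μ x then 1 else 0) - (μ x - ν x) := fun x => by
    split_ifs with hx
    · rw [abs_of_nonneg (by linarith)]; ring
    · rw [abs_of_neg (by linarith)]; ring
  rw [tvDist, ← sub_dotProduct, Finset.sum_congr rfl fun x _ => habs x, Finset.sum_sub_distrib,
    ← Finset.mul_sum, Finset.sum_sub_distrib, h, sub_self, sub_zero,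
    mul_div_cancel_left₀ _ two_ne_zero]
  rfl

lemma dotProduct_sub_le_tvDist {μ ν f : Ω → ℝ} (h : ∑ x, μ x = ∑ x, ν x)
    (hf : f ∈ Set.Icc 0 1) : μ ⬝ᵥ f - ν ⬝ᵥ f ≤ tvDist μ ν := by
  have hcenter : μ ⬝ᵥ f - ν ⬝ᵥ f = ∑ x, (μ x - ν x) * (f x - 1 / 2) := by
    simp only [mul_sub, Finset.sum_sub_distrib, ← Finset.sum_mul, h, sub_self, zero_mul, sub_zero,
      ← sub_dotProduct]
    rfl
  rw [hcenter, tvDist, Finset.sum_div]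
  refine Finset.sum_le_sum fun x _ => (le_abs_self _).trans ?_
  have hfx : |f x - 1 / 2| ≤ 1 / 2 := by
    have h₀ : 0 ≤ f x := hf.1 x
    have h₁ : f x ≤ 1 := hf.2 x
    rw [abs_le]
    constructor <;> linarith
  rw [abs_mul, ← mul_one_div |μ x - ν x|]
  exact mul_le_mul_of_nonneg_left hfx (abs_nonneg _)

open scoped MatrixOrder

-- With `c = ±1`, the quadratic form is `½ ∑ x, ∑ y, W x y * (f x ± f y) ^ 2`.
lemma diagonal_rowSum_add_smul_nonneg [DecidableEq Ω] {W : Matrix Ω Ω ℝ} (hW : ∀ x y, 0 ≤ W x y)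
    (hsymm : W.IsSymm) {c : ℝ} (hc : c ^ 2 = 1) :
    0 ≤ diagonal (fun x => ∑ y, W x y) + c • W := by
  refine (PosSemidef.of_dotProduct_mulVec_nonneg ?_ fun f => ?_).nonneg
  · exact (isHermitian_diagonal _).add (by
      rw [IsHermitian, conjTranspose_eq_transpose_of_trivial, transpose_smul, hsymm.eq])
  · have hswap : ∑ x, ∑ y, W x y * f y ^ 2 = ∑ x, ∑ y, W x y * f x ^ 2 := by
      rw [Finset.sum_comm]
      simp only [hsymm.apply]
    have hsq : star f ⬝ᵥ (diagonal (fun x => ∑ y, W x y) + c • W) *ᵥ f =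
        (∑ x, ∑ y, W x y * (f x + c * f y) ^ 2) / 2 := by
      have hexpand : ∀ x y, W x y * (f x + c * f y) ^ 2 =
          W x y * f x ^ 2 + W x y * f y ^ 2 + 2 * c * (f x * (W x y * f y)) := fun x y => by
        linear_combination W x y * f y ^ 2 * hc
      have hdiag : f ⬝ᵥ diagonal (fun x => ∑ y, W x y) *ᵥ f = ∑ x, ∑ y, W x y * f x ^ 2 := by
        simp only [dotProduct, mulVec_diagonal, Finset.sum_mul, Finset.mul_sum]
        exact Finset.sum_congr rfl fun x _ => Finset.sum_congr rfl fun y _ => by ring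
      have hoff : f ⬝ᵥ W *ᵥ f = ∑ x, ∑ y, f x * (W x y * f y) := by
        simp only [dotProduct, mulVec, Finset.mul_sum]
      simp only [hexpand, Finset.sum_add_distrib, hswap, ← Finset.mul_sum, star_trivial, add_mulVec,
        dotProduct_add, hdiag, smul_mulVec, dotProduct_smul, smul_eq_mul]
      rw [hoff]
      simp only [← Finset.mul_sum]
      ring
    rw [hsq]
    have := fun x y => mul_nonneg (hW x y) (sq_nonneg (f x + c * f y))
    exact div_nonneg (Finset.sum_nonneg fun x _ => Finset.sum_nonneg fun y _ => this x y) two_pos.le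

end Matrix

section ReversibleLazyChain

variable {Ω : Type*} [Fintype Ω] {P : Matrix Ω Ω ℝ} {π : Ω → ℝ}

lemma IsReversible.vecMul_eq (hrev : IsReversible P π) (hP : IsStochastic P) : π ᵥ* P = π := by
  ext y
  simp only [vecMul, dotProduct, hrev _ y, ← Finset.mul_sum, hP.2, mul_one]

variable [DecidableEq Ω]

lemma vecMul_lazyM_eq (h : π ᵥ* P = π) : π ᵥ* lazyM P = π := by
  rw [lazyM, vecMul_smul, vecMul_add, vecMul_one, h, ← two_smul ℝ, smul_smul]
  norm_num

lemma vecMul_pow_eq {M : Matrix Ω Ω ℝ} (h : π ᵥ* M = π) (n : ℕ) : π ᵥ* M ^ n = π := by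
  induction n with
  | zero => rw [pow_zero, vecMul_one]
  | succ n ih => rw [pow_succ, ← vecMul_vecMul, ih, h]

open scoped MatrixOrder

lemma IsReversible.diagonal_add_smul_mul_nonneg (hrev : IsReversible P π) (hP : IsStochastic P)
    (hπ : 0 ≤ π) {c : ℝ} (hc : c ^ 2 = 1) : 0 ≤ diagonal π + c • (diagonal π * P) := by
  have hsymm : (diagonal π * P).IsSymm := IsSymm.ext fun x y => by
    simp only [diagonal_mul, hrev x y]
  have h := diagonal_rowSum_add_smul_nonneg (W := diagonal π * P)
    (fun x y => by rw [diagonal_mul]; exact mul_nonneg (hπ x) (hP.1 x y)) hsymm hc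
  simpa only [diagonal_mul, ← Finset.mul_sum, hP.2, mul_one] using h

lemma IsReversible.diagonal_mul_lazyM_nonneg (hrev : IsReversible P π) (hP : IsStochastic P)
    (hπ : 0 ≤ π) : 0 ≤ diagonal π * lazyM P := by
  have h := hrev.diagonal_add_smul_mul_nonneg hP hπ (one_pow 2)
  rw [lazyM, mul_smul_comm, mul_add, mul_one]
  simpa using smul_nonneg (by norm_num : (0 : ℝ) ≤ 2⁻¹) h

lemma IsReversible.diagonal_mul_lazyM_le (hrev : IsReversible P π) (hP : IsStochastic P)
    (hπ : 0 ≤ π) : diagonal π * lazyM P ≤ diagonal π := by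
  have h := hrev.diagonal_add_smul_mul_nonneg hP hπ (neg_one_sq (R := ℝ))
  have hsub : diagonal π - diagonal π * lazyM P =
      (2⁻¹ : ℝ) • (diagonal π + (-1 : ℝ) • (diagonal π * P)) := by
    rw [lazyM, mul_smul_comm, mul_add, mul_one]
    module
  rw [← sub_nonneg, hsub]
  exact smul_nonneg (by norm_num) h

lemma dotProduct_abs_le_sqrt {μ : Ω → ℝ} (hμ : IsProbVec μ) (g : Ω → ℝ) :
    μ ⬝ᵥ |g| ≤ √(g ⬝ᵥ diagonal μ *ᵥ g) := by
  refine Real.le_sqrt_of_sq_le ?_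
  have h := Real.pow_arith_mean_le_arith_mean_pow Finset.univ μ |g| (fun x _ => hμ.1 x) hμ.2
    (fun x _ => abs_nonneg (g x)) 2
  refine h.trans_eq (Finset.sum_congr rfl fun x _ => ?_)
  rw [Pi.abs_apply, sq_abs, mulVec_diagonal]
  ring

lemma IsReversible.dotProduct_abs_lazyM_pow_sub_le (hrev : IsReversible P π) (hP : IsStochastic P)
    (hπ : IsProbVec π) {f : Ω → ℝ} (hf : f ∈ Set.Icc 0 1) (n : ℕ) :
    π ⬝ᵥ |lazyM P ^ (n + 1) *ᵥ f - lazyM P ^ n *ᵥ f| ≤ 1 / (n + 1) := by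
  set Q := lazyM P
  set T := Q ^ n - Q ^ (n + 1) with hT
  have hD : (0 : Matrix Ω Ω ℝ) ≤ diagonal π := (PosSemidef.diagonal hπ.1).nonneg
  have hop := succ_sq_nsmul_star_conj_le hD (hrev.diagonal_mul_lazyM_nonneg hP hπ.1)
    (hrev.diagonal_mul_lazyM_le hP hπ.1) n
  have hform : ((n : ℝ) + 1) ^ 2 * (T *ᵥ f ⬝ᵥ diagonal π *ᵥ T *ᵥ f) ≤
      f ⬝ᵥ diagonal π *ᵥ f := by
    have h := (le_iff.mp hop).dotProduct_mulVec_nonneg f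
    have hconj : f ⬝ᵥ (star T * diagonal π * T) *ᵥ f = T *ᵥ f ⬝ᵥ diagonal π *ᵥ T *ᵥ f := by
      rw [← mulVec_mulVec, ← mulVec_mulVec, dotProduct_mulVec, star_eq_conjTranspose,
        conjTranspose_eq_transpose_of_trivial, vecMul_transpose]
    rw [← Nat.cast_smul_eq_nsmul ℝ, sub_mulVec, smul_mulVec, dotProduct_sub, dotProduct_smul,
      star_trivial, hconj, sub_nonneg] at h
    simpa using h
  have hbound : f ⬝ᵥ diagonal π *ᵥ f ≤ 1 := by
    have hsq : f * f ≤ 1 := fun x => mul_le_one₀ (hf.2 x) (hf.1 x) (hf.2 x)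
    refine le_trans (Finset.sum_congr rfl fun x _ => ?_).le (hπ.dotProduct_le_one hsq)
    rw [mulVec_diagonal, Pi.mul_apply]
    ring
  have hneg : lazyM P ^ (n + 1) *ᵥ f - lazyM P ^ n *ᵥ f = -(T *ᵥ f) := by
    rw [hT, sub_mulVec, neg_sub]
  rw [hneg, abs_neg]
  refine (dotProduct_abs_le_sqrt hπ _).trans ((Real.sqrt_le_left (by positivity)).mpr ?_)
  rw [div_pow, one_pow, le_div_iff₀' (by positivity)]
  exact hform.trans hbound

end ReversibleLazyChain

section MaximalFunction

variable {Ω : Type*} [Fintype Ω] [DecidableEq Ω]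

/-- The maximal function `x ↦ max (Q ^ k f) x` over the time window `a ≤ k ≤ a + l`. It is the
test function that replaces `f` when the number of remaining steps is only known to lie in this
window. -/
noncomputable def maximalFun (Q : Matrix Ω Ω ℝ) (f : Ω → ℝ) (a l : ℕ) : Ω → ℝ := fun x =>
  (Finset.range (l + 1)).sup' Finset.nonempty_range_add_one fun i => (Q ^ (a + i) *ᵥ f) x

lemma pow_mulVec_le_maximalFun (Q : Matrix Ω Ω ℝ) (f : Ω → ℝ) {a l n : ℕ} (han : a ≤ n)
    (hnl : n ≤ a + l) : Q ^ n *ᵥ f ≤ maximalFun Q f a l := fun x => by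
  obtain ⟨i, rfl⟩ := Nat.exists_eq_add_of_le han
  exact Finset.le_sup' (fun i => (Q ^ (a + i) *ᵥ f) x) (by simpa using Nat.lt_succ_of_le hnl)

lemma maximalFun_mem_Icc {Q : Matrix Ω Ω ℝ} (hQ : Q ∈ rowStochastic ℝ Ω) {f : Ω → ℝ}
    (hf : f ∈ Set.Icc 0 1) (a l : ℕ) : maximalFun Q f a l ∈ Set.Icc 0 1 := by
  have h := fun n => mulVec_mem_Icc (pow_mem hQ n) hf
  exact ⟨(h a).1.trans (pow_mulVec_le_maximalFun Q f le_rfl (Nat.le_add_right a l)),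
    fun x => Finset.sup'_le _ _ fun i _ => (h (a + i)).2 x⟩

lemma maximalFun_le (Q : Matrix Ω Ω ℝ) (f : Ω → ℝ) (a l : ℕ) :
    maximalFun Q f a l ≤
      Q ^ a *ᵥ f + ∑ i ∈ Finset.range l, |Q ^ (a + i + 1) *ᵥ f - Q ^ (a + i) *ᵥ f| := fun x => by
  simpa [maximalFun, add_assoc] using
    sup'_range_succ_le_add_sum_abs_sub (fun i => (Q ^ (a + i) *ᵥ f) x) l

lemma IsReversible.dotProduct_maximalFun_lazyM_le {P : Matrix Ω Ω ℝ} {π : Ω → ℝ}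
    (hrev : IsReversible P π) (hP : IsStochastic P) (hπ : IsProbVec π) {f : Ω → ℝ}
    (hf : f ∈ Set.Icc 0 1) (a l : ℕ) :
    π ⬝ᵥ maximalFun (lazyM P) f a l ≤ π ⬝ᵥ f + l / (a + 1) := by
  have hstat : π ⬝ᵥ lazyM P ^ a *ᵥ f = π ⬝ᵥ f := by
    rw [dotProduct_mulVec, vecMul_pow_eq (vecMul_lazyM_eq (hrev.vecMul_eq hP))]
  have hincr : ∀ i, π ⬝ᵥ |lazyM P ^ (a + i + 1) *ᵥ f - lazyM P ^ (a + i) *ᵥ f| ≤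
      1 / ((a : ℝ) + 1) := fun i => by
    refine (hrev.dotProduct_abs_lazyM_pow_sub_le hP hπ hf (a + i)).trans ?_
    gcongr
    exact Nat.le_add_right a i
  calc π ⬝ᵥ maximalFun (lazyM P) f a l
      ≤ π ⬝ᵥ f + ∑ i ∈ Finset.range l,
          π ⬝ᵥ |lazyM P ^ (a + i + 1) *ᵥ f - lazyM P ^ (a + i) *ᵥ f| := by
        rw [← hstat, ← dotProduct_sum, ← dotProduct_add]
        exact dotProduct_le_dotProduct_of_nonneg_left (maximalFun_le _ f a l) hπ.1
    _ ≤ π ⬝ᵥ f + ∑ _i ∈ Finset.range l, 1 / ((a : ℝ) + 1) := by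
        gcongr with i
        exact hincr i
    _ = π ⬝ᵥ f + l / (a + 1) := by
        rw [Finset.sum_const, Finset.card_range, nsmul_eq_mul, mul_one_div]

end MaximalFunction

section Poisson

open MeasureTheory ProbabilityTheory

open scoped NNReal

lemma exp_le_one_add_add_sq {x : ℝ} (hx : x ≤ 3 / 2) : Real.exp x ≤ 1 + x + x ^ 2 := by
  rcases le_total 0 x with h₀ | h₀
  · have hhalf : Real.exp (x / 2) ≤ 1 + x / 2 + (x / 2) ^ 2 / 2 + 2 / 9 * (x / 2) ^ 3 := by
      have h := Real.exp_bound' (by linarith : 0 ≤ x / 2) (by linarith) (n := 3) (by norm_num)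
      norm_num [Finset.sum_range_succ, Nat.factorial] at h
      linarith
    calc Real.exp x = Real.exp (x / 2) ^ 2 := by rw [← Real.exp_nat_mul]; congr 1; ring
      _ ≤ (1 + x / 2 + (x / 2) ^ 2 / 2 + 2 / 9 * (x / 2) ^ 3) ^ 2 := by gcongr
      _ ≤ 1 + x + x ^ 2 := by
        have h2 : x ^ 2 ≤ 9 / 4 := by nlinarith
        have h3 : x ^ 3 ≤ 27 / 8 := by nlinarith
        have h4 : x ^ 4 ≤ 81 / 16 := by nlinarith
        nlinarith [sq_nonneg x, mul_nonneg (sq_nonneg x) (by linarith : 0 ≤ 3 / 2 - x)]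
  · have hexp := Real.quadratic_le_exp_of_nonneg (neg_nonneg.mpr h₀)
    rw [← neg_neg x, Real.exp_neg, neg_neg]
    refine inv_le_of_inv_le₀ (by nlinarith) (le_trans ?_ hexp)
    rw [inv_le_iff_one_le_mul₀ (by nlinarith)]
    nlinarith [mul_nonneg (sq_nonneg x) (neg_nonneg.mpr h₀), sq_nonneg (x ^ 2)]

lemma hasSum_poisson_mul_exp (r θ : ℝ) :
    HasSum (fun k : ℕ => Real.exp (-r) * r ^ k / k.factorial * Real.exp (θ * k))
      (Real.exp (r * (Real.exp θ - 1))) := by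
  have h := (NormedSpace.expSeries_div_hasSum_exp (r * Real.exp θ)).mul_left (Real.exp (-r))
  rw [← Real.exp_eq_exp_ℝ, ← Real.exp_add] at h
  convert! h using 1
  · ext k
    rw [mul_pow, ← Real.exp_nat_mul, mul_comm θ]
    ring
  · congr 1
    ring

lemma integrable_exp_mul_poissonMeasure (r : ℝ≥0) (θ : ℝ) :
    Integrable (fun k : ℕ => Real.exp (θ * k)) (poissonMeasure r) := by
  rw [integrable_poissonMeasure_iff]
  simpa only [Real.norm_eq_abs, Real.abs_exp] using (hasSum_poisson_mul_exp r θ).summable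

lemma mgf_poissonMeasure (r : ℝ≥0) (θ : ℝ) :
    mgf (fun k : ℕ => (k : ℝ)) (poissonMeasure r) θ = Real.exp (r * (Real.exp θ - 1)) := by
  rw [mgf, integral_poissonMeasure]
  exact (hasSum_poisson_mul_exp r θ).tsum_eq

lemma mgf_poissonMeasure_le (r : ℝ≥0) {θ : ℝ} (hθ : θ ≤ 3 / 2) :
    mgf (fun k : ℕ => (k : ℝ)) (poissonMeasure r) θ ≤ Real.exp (r * (θ + θ ^ 2)) := by
  rw [mgf_poissonMeasure]
  gcongr
  linarith [exp_le_one_add_add_sq hθ]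

-- Chernoff's bound at `θ = ±ε / (2 r)`, where the exponent `r θ ^ 2 - |θ| ε` is minimal.
theorem poissonMeasure_real_lt_abs_sub_le {r : ℝ≥0} {ε : ℝ} (hε : 0 ≤ ε) (hεr : ε ≤ 3 * r) :
    (poissonMeasure r).real {k : ℕ | ε < |(k : ℝ) - r|} ≤ 2 * Real.exp (-(ε ^ 2 / (4 * r))) := by
  set θ := ε / (2 * r) with hθ_def
  have hθ₀ : 0 ≤ θ := by positivity
  have hθ : θ ≤ 3 / 2 := div_le_of_le_mul₀ (by positivity) (by norm_num) (by linarith)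
  have hexponent : r * θ ^ 2 - θ * ε = -(ε ^ 2 / (4 * r)) := by
    rcases eq_or_ne (r : ℝ) 0 with h | h
    · simp [hθ_def, h]
    · rw [hθ_def]; field_simp; ring
  have hupper : (poissonMeasure r).real {k : ℕ | r + ε ≤ k} ≤ Real.exp (-(ε ^ 2 / (4 * r))) := by
    refine (measure_ge_le_exp_mul_mgf _ hθ₀ (integrable_exp_mul_poissonMeasure r θ)).trans ?_
    refine (mul_le_mul_of_nonneg_left (mgf_poissonMeasure_le r hθ) (Real.exp_nonneg _)).trans_eq ?_
    rw [← Real.exp_add, ← hexponent]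
    ring_nf
  have hlower : (poissonMeasure r).real {k : ℕ | (k : ℝ) ≤ r - ε} ≤
      Real.exp (-(ε ^ 2 / (4 * r))) := by
    refine (measure_le_le_exp_mul_mgf _ (neg_nonpos.mpr hθ₀)
      (integrable_exp_mul_poissonMeasure r (-θ))).trans ?_
    refine (mul_le_mul_of_nonneg_left (mgf_poissonMeasure_le r (by linarith : -θ ≤ 3 / 2))
      (Real.exp_nonneg _)).trans_eq ?_
    rw [← Real.exp_add, ← hexponent]
    ring_nf
  have hsub : {k : ℕ | ε < |(k : ℝ) - r|} ⊆ {k : ℕ | r + ε ≤ k} ∪ {k : ℕ | (k : ℝ) ≤ r - ε} :=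
    fun k (hk : ε < |(k : ℝ) - r|) => (lt_abs.mp hk).imp
      (fun h => show (r : ℝ) + ε ≤ k by linarith) (fun h => show (k : ℝ) ≤ r - ε by linarith)
  calc (poissonMeasure r).real {k : ℕ | ε < |(k : ℝ) - r|}
      ≤ (poissonMeasure r).real ({k : ℕ | r + ε ≤ k} ∪ {k : ℕ | (k : ℝ) ≤ r - ε}) :=
        measureReal_mono hsub
    _ ≤ _ := measureReal_union_le _ _
    _ ≤ 2 * Real.exp (-(ε ^ 2 / (4 * r))) := by linarith

lemma poissonMeasure_real_two_sqrt_lt_abs_sub_le {t : ℝ≥0} {s : ℝ} (hs : 1 < s)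
    (hst : Real.log s ≤ t) :
    (poissonMeasure t).real {k : ℕ | 2 * √(2 * t * Real.log s) < |(k : ℝ) - t|} ≤ 2 / s ^ 2 := by
  have hlog : 0 < Real.log s := Real.log_pos hs
  have hsq : (2 * √(2 * t * Real.log s)) ^ 2 = 8 * t * Real.log s := by
    rw [mul_pow, Real.sq_sqrt (by positivity)]
    ring
  have hexponent : (2 * √(2 * t * Real.log s)) ^ 2 / (4 * t) = Real.log (s ^ 2) := by
    rw [hsq, Real.log_pow, div_eq_iff (by linarith)]
    push_cast
    ring
  have hle : 2 * √(2 * t * Real.log s) ≤ 3 * t :=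
    le_of_sq_le_sq (by nlinarith) (by positivity)
  refine (poissonMeasure_real_lt_abs_sub_le (by positivity) hle).trans_eq ?_
  rw [hexponent, Real.exp_neg, Real.exp_log (by positivity), div_eq_mul_inv]

end Poisson

section HeatKernel

open MeasureTheory ProbabilityTheory

open scoped NNReal

variable {Ω : Type*} [Fintype Ω] [DecidableEq Ω]

/-- The transition matrix `H_t` at time `t` of the rate one continuous-time chain with jump matrix
`P`. It is defined as a matrix exponential, rather than by its Poisson series, so that passing to
the lazy chain is visibly a change of time. -/
noncomputable def heatKernel (P : Matrix Ω Ω ℝ) (t : ℝ) : Matrix Ω Ω ℝ :=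
  NormedSpace.exp (t • (P - 1))

lemma heatKernel_lazyM (P : Matrix Ω Ω ℝ) (t : ℝ) :
    heatKernel (lazyM P) t = heatKernel P (t / 2) := by
  rw [heatKernel, heatKernel, lazyM]
  congr 1
  module

open scoped Matrix.Norms.Operator in
lemma hasSum_heatKernel (P : Matrix Ω Ω ℝ) (t : ℝ) :
    HasSum (fun k : ℕ => (Real.exp (-t) * t ^ k / k.factorial) • P ^ k) (heatKernel P t) := by
  have hexp_neg : NormedSpace.exp (-t • (1 : Matrix Ω Ω ℝ)) = Real.exp (-t) • 1 := by
    have h := NormedSpace.algebraMap_exp_comm (𝕂 := ℝ) (𝔸 := Matrix Ω Ω ℝ) (-t)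
    rw [Algebra.algebraMap_eq_smul_one, Algebra.algebraMap_eq_smul_one] at h
    rw [Real.exp_eq_exp_ℝ]
    exact h.symm
  have hfactor : heatKernel P t = Real.exp (-t) • NormedSpace.exp (t • P) := by
    have hcomm : Commute (-t • (1 : Matrix Ω Ω ℝ)) (t • P) :=
      ((Commute.one_left P).smul_left _).smul_right _
    rw [heatKernel, smul_sub, sub_eq_neg_add, ← neg_smul, Matrix.exp_add_of_commute _ _ hcomm,
      hexp_neg, smul_mul_assoc, one_mul]
  rw [hfactor]
  convert! (NormedSpace.exp_series_hasSum_exp' (𝕂 := ℝ) (t • P)).const_smul (Real.exp (-t)) using 2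
  rw [smul_pow, smul_smul, smul_smul]
  congr 1
  ring

lemma hasSum_vecMul_heatKernel_dotProduct (P : Matrix Ω Ω ℝ) (t : ℝ) (μ f : Ω → ℝ) :
    HasSum (fun k : ℕ => Real.exp (-t) * t ^ k / k.factorial * (μ ᵥ* P ^ k ⬝ᵥ f))
      (μ ᵥ* heatKernel P t ⬝ᵥ f) := by
  let L : Matrix Ω Ω ℝ →ₗ[ℝ] ℝ :=
    { toFun := fun M => μ ᵥ* M ⬝ᵥ f
      map_add' := fun M N => by rw [vecMul_add, add_dotProduct]
      map_smul' := fun c M => by rw [vecMul_smul, smul_dotProduct, RingHom.id_apply] }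
  have h := (hasSum_heatKernel P t).map L L.continuous_of_finiteDimensional
  convert! h using 2
  simp only [Function.comp_apply, map_smul, smul_eq_mul]
  rfl

lemma contDist_eq_tvDist_heatKernel (P : Matrix Ω Ω ℝ) (π : Ω → ℝ) (t : ℝ) (μ : Ω → ℝ) :
    contDist P π t μ = tvDist (μ ᵥ* heatKernel P t) π := by
  rw [contDist]
  congr 1
  ext y
  simpa only [dotProduct_single_one] using
    (hasSum_vecMul_heatKernel_dotProduct P t μ (Pi.single y 1)).tsum_eq

lemma integral_poissonMeasure_vecMul_pow_dotProduct (P : Matrix Ω Ω ℝ) (t : ℝ≥0) (μ f : Ω → ℝ) :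
    ∫ k, μ ᵥ* P ^ k ⬝ᵥ f ∂poissonMeasure t = μ ᵥ* heatKernel P t ⬝ᵥ f := by
  rw [integral_poissonMeasure]
  exact (hasSum_vecMul_heatKernel_dotProduct P t μ f).tsum_eq

variable {Q : Matrix Ω Ω ℝ} {μ : Ω → ℝ}

lemma IsProbVec.sum_vecMul_heatKernel (hμ : IsProbVec μ) (hQ : Q ∈ rowStochastic ℝ Ω) (t : ℝ≥0) :
    ∑ x, (μ ᵥ* heatKernel Q t) x = 1 := by
  have hone : ∀ k, μ ᵥ* Q ^ k ⬝ᵥ 1 = 1 := fun k => by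
    rw [dotProduct_one, (hμ.vecMul (pow_mem hQ k)).2]
  rw [← dotProduct_one, ← integral_poissonMeasure_vecMul_pow_dotProduct]
  simp only [hone, integral_const, probReal_univ, one_smul]

lemma vecMul_pow_dotProduct_le_maximalFun (hQ : Q ∈ rowStochastic ℝ Ω) (hμ : IsProbVec μ)
    (f : Ω → ℝ) {k a l N : ℕ} (hkN : k + a ≤ N) (hNk : N ≤ k + a + l) :
    μ ᵥ* Q ^ N ⬝ᵥ f ≤ μ ᵥ* Q ^ k ⬝ᵥ maximalFun Q f a l := by
  obtain ⟨n, rfl⟩ := Nat.exists_eq_add_of_le (Nat.le_of_add_right_le hkN)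
  rw [pow_add, ← vecMul_vecMul, ← dotProduct_mulVec]
  exact dotProduct_le_dotProduct_of_nonneg_left
    (pow_mulVec_le_maximalFun Q f (by lia) (by lia)) (hμ.vecMul (pow_mem hQ k)).1

lemma vecMul_pow_dotProduct_le_heatKernel (hQ : Q ∈ rowStochastic ℝ Ω) (hμ : IsProbVec μ)
    {f : Ω → ℝ} (hf : f ∈ Set.Icc 0 1) (t : ℝ≥0) {B : Set ℕ} {a l N : ℕ}
    (hB : ∀ k ∉ B, k + a ≤ N ∧ N ≤ k + a + l) :
    μ ᵥ* Q ^ N ⬝ᵥ f ≤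
      μ ᵥ* heatKernel Q t ⬝ᵥ maximalFun Q f a l + (poissonMeasure t).real B := by
  set φ := maximalFun Q f a l
  have hφ : φ ∈ Set.Icc 0 1 := maximalFun_mem_Icc hQ hf a l
  have hprob := fun k => hμ.vecMul (pow_mem hQ k)
  have hφ_nonneg : ∀ k, 0 ≤ μ ᵥ* Q ^ k ⬝ᵥ φ := fun k =>
    dotProduct_nonneg_of_nonneg (hprob k).1 hφ.1
  have hpointwise : ∀ k, μ ᵥ* Q ^ N ⬝ᵥ f ≤ μ ᵥ* Q ^ k ⬝ᵥ φ + B.indicator 1 k := fun k => by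
    by_cases hk : k ∈ B
    · rw [Set.indicator_of_mem hk, Pi.one_apply]
      exact ((hprob N).dotProduct_le_one hf.2).trans (le_add_of_nonneg_left (hφ_nonneg k))
    · rw [Set.indicator_of_notMem hk, add_zero]
      exact vecMul_pow_dotProduct_le_maximalFun hQ hμ f (hB k hk).1 (hB k hk).2
  have hint_φ : Integrable (fun k => μ ᵥ* Q ^ k ⬝ᵥ φ) (poissonMeasure t) :=
    .of_bound .of_discrete 1 (.of_forall fun k => by
      rw [Real.norm_of_nonneg (hφ_nonneg k)]
      exact (hprob k).dotProduct_le_one hφ.2)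
  have hint_B : Integrable (B.indicator (1 : ℕ → ℝ)) (poissonMeasure t) :=
    (integrable_const 1).indicator .of_discrete
  calc μ ᵥ* Q ^ N ⬝ᵥ f = ∫ _k : ℕ, μ ᵥ* Q ^ N ⬝ᵥ f ∂poissonMeasure t := by
        rw [integral_const, probReal_univ, one_smul]
    _ ≤ ∫ k, (μ ᵥ* Q ^ k ⬝ᵥ φ + B.indicator 1 k) ∂poissonMeasure t :=
        integral_mono (integrable_const _) (hint_φ.add hint_B) hpointwise
    _ = μ ᵥ* heatKernel Q t ⬝ᵥ φ + (poissonMeasure t).real B := by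
        rw [integral_add hint_φ hint_B, integral_poissonMeasure_vecMul_pow_dotProduct,
          integral_indicator_one .of_discrete]

theorem IsReversible.tvDist_vecMul_lazyM_pow_le {P : Matrix Ω Ω ℝ} {π : Ω → ℝ}
    (hrev : IsReversible P π) (hP : IsStochastic P) (hπ : IsProbVec π) (hμ : IsProbVec μ)
    (t : ℝ≥0) {B : Set ℕ} {a l N : ℕ} (hB : ∀ k ∉ B, k + a ≤ N ∧ N ≤ k + a + l) :
    tvDist (μ ᵥ* lazyM P ^ N) π ≤
      tvDist (μ ᵥ* heatKernel (lazyM P) t) π + (poissonMeasure t).real B + l / (a + 1) := by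
  have hQ : lazyM P ∈ rowStochastic ℝ Ω := lazyM_mem_rowStochastic hP.mem_rowStochastic
  obtain ⟨f, hf, htv⟩ := exists_tvDist_eq_dotProduct_sub
    ((hμ.vecMul (pow_mem hQ N)).2.trans hπ.2.symm)
  have hchain := vecMul_pow_dotProduct_le_heatKernel hQ hμ hf t hB
  have hπφ := hrev.dotProduct_maximalFun_lazyM_le hP hπ hf a l
  have hφ := dotProduct_sub_le_tvDist ((hμ.sum_vecMul_heatKernel hQ t).trans hπ.2.symm)
    (maximalFun_mem_Icc hQ hf a l)
  linarith

end HeatKernel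

section Window

lemma le_floor_and_floor_le_of_abs_sub_le {t r w : ℝ} (ht : 0 ≤ t) (hw : 0 ≤ w) {k : ℕ}
    (hk : |k - t| ≤ r) :
    k + ⌊w⌋₊ ≤ ⌊t + ⌈w + r⌉⌋₊ ∧ ⌊t + ⌈w + r⌉⌋₊ ≤ k + ⌊w⌋₊ + (⌈2 * r⌉₊ + 1) := by
  obtain ⟨hk_lower, hk_upper⟩ := abs_le.mp hk
  have hm := Int.le_ceil (w + r)
  constructor
  · refine Nat.le_floor ?_
    push_cast
    linarith [Nat.floor_le hw]
  · have hN : (⌊t + ⌈w + r⌉⌋₊ : ℝ) ≤ t + ⌈w + r⌉ := Nat.floor_le (by linarith)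
    have hlt : (⌊t + ⌈w + r⌉⌋₊ : ℝ) < k + ⌊w⌋₊ + ⌈2 * r⌉₊ + 2 := by
      linarith [Int.ceil_lt_add_one (w + r), Nat.lt_floor_add_one w, Nat.le_ceil (2 * r)]
    exact_mod_cast Nat.lt_succ_iff.mp (by exact_mod_cast hlt)

lemma ceil_add_one_div_floor_add_one_le {r q : ℝ} (hr : 1 ≤ r) (hq : 0 < q) :
    ((⌈2 * r⌉₊ + 1 : ℕ) : ℝ) / (⌊r * q⌋₊ + 1) ≤ 4 / q := by
  have hceil : (⌈2 * r⌉₊ : ℝ) < 2 * r + 1 := Nat.ceil_lt_add_one (by linarith)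
  calc ((⌈2 * r⌉₊ + 1 : ℕ) : ℝ) / (⌊r * q⌋₊ + 1) ≤ 4 * r / (r * q) := by
        gcongr
        · push_cast; linarith
        · exact (Nat.lt_floor_add_one _).le
    _ = 4 / q := by rw [mul_comm r q]; exact mul_div_mul_right _ _ (by positivity)

end Window

theorem lazy_dist_le_cont_dist_coupling_general {Ω : Type*} [Fintype Ω] [DecidableEq Ω]
    {P : Matrix Ω Ω ℝ} {π μ : Ω → ℝ} (hP : IsStochastic P) (hπ : IsProbVec π)
    (hrev : IsReversible P π) (hμ : IsProbVec μ) {t s : ℝ} (hs : 2 ≤ s) (hst : s ≤ Real.exp t) :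
    lazyDist P π (t + ⌈2 * √(2 * t * Real.log s) * (√s + 1)⌉) μ ≤
      contDist P π (t / 2) μ + 2 / s ^ 2 + √(16 / s) := by
  have hlog : 1 / 2 ≤ Real.log s := by
    linarith [Real.log_two_gt_d9, Real.log_le_log two_pos hs]
  have hlogt : Real.log s ≤ t := (Real.log_le_iff_le_exp (by linarith)).mpr hst
  lift t to NNReal using by linarith
  have htail := poissonMeasure_real_two_sqrt_lt_abs_sub_le (by linarith : 1 < s) hlogt
  set r := 2 * √(2 * t * Real.log s)
  have hr : 1 ≤ r := by
    have h : 1 / 2 ≤ √(2 * t * Real.log s) := Real.le_sqrt_of_sq_le (by nlinarith)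
    linarith
  have hwindow : ∀ k ∉ {k : ℕ | r < |(k : ℝ) - t|},
      k + ⌊r * √s⌋₊ ≤ ⌊(t : ℝ) + ⌈r * (√s + 1)⌉⌋₊ ∧
        ⌊(t : ℝ) + ⌈r * (√s + 1)⌉⌋₊ ≤ k + ⌊r * √s⌋₊ + (⌈2 * r⌉₊ + 1) := fun k hk => by
    rw [mul_add_one]
    exact le_floor_and_floor_le_of_abs_sub_le t.2 (by positivity) (not_lt.mp hk)
  have hmain := hrev.tvDist_vecMul_lazyM_pow_le hP hπ hμ t hwindow
  have hratio := ceil_add_one_div_floor_add_one_le hr (by positivity : 0 < √s)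
  have hsqrt : 4 / √s = √(16 / s) := by
    rw [Real.sqrt_div (by norm_num), show (16 : ℝ) = 4 ^ 2 by norm_num, Real.sqrt_sq (by norm_num)]
  rw [lazyDist, contDist_eq_tvDist_heatKernel, ← heatKernel_lazyM, ← hsqrt]
  linarith

/-- **Proposition 3.2 (eq. (16)) of Hermon–Peres.**
There is an absolute constant `C` such that for every finite irreducible reversible Markov
chain, every initial distribution `μ`, every `t ≥ 1` and every `2 ≤ s ≤ e^t`,
`d_L(t + m, μ) ≤ d_c(t/2, μ) + 2/s² + √(C/s)`, where `r = 2√(2t log s)` and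
`m = ⌈r(√s + 1)⌉`. -/
theorem lazy_dist_le_cont_dist_coupling :
    ∃ C : ℝ, 0 < C ∧
      ∀ (Ω : Type) [Fintype Ω] [DecidableEq Ω]
        (P : Matrix Ω Ω ℝ) (pi : Ω → ℝ), IsRevMC P pi →
        ∀ μ : Ω → ℝ, IsProbVec μ →
        ∀ t s : ℝ, 1 ≤ t → 2 ≤ s → s ≤ Real.exp t →
          lazyDist P pi
              (t + ((⌈2 * Real.sqrt (2 * t * Real.log s) * (Real.sqrt s + 1)⌉ : ℤ) : ℝ)) μ ≤
            contDist P pi (t / 2) μ + 2 / s ^ 2 + Real.sqrt (C / s) :=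
  ⟨16, by norm_num, fun _ _ _ _ _ h _ hμ _ _ _ hs hst =>
    lazy_dist_le_cont_dist_coupling_general h.1.1 h.1.2.2.1 h.2 hμ hs hst⟩
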